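/- Let L : List (ℕ × α) be sorted by strictly decreasing timestamps, and let t₁ ≤ t₂ be timestamps such that no entry of L has its timestamp in the half-open interval (t₁, t₂] (i.e., every entry e of L has e.1 ≤ t₁ or t₂ < e.1). Then eval L t₁ = eval L t₂. That is, two dereferences of the same bundle whose snapshot timestamps are not separated by any finalized update of that link observe the same value. -/

import Mathlib

/-- Dereference of a bundle at timestamp `t`: the value of the first entry
with timestamp ≤ t. -/
def eval {α : Type*} (L : List (ℕ × α)) (t : ℕ) : Option α :=
  (L.find? (fun e => e.1 ≤ t)).map Prod.snd

/-- Two dereferences of the same bundle whose snapshot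
timestamps are not separated by any finalized update of that link observe
the same value. -/
theorem eval_eq_of_no_entry_between {α : Type*} (L : List (ℕ × α)) (t₁ t₂ : ℕ)
    (hsorted : List.Chain' (fun a b => b.1 < a.1) L)
    (hle : t₁ ≤ t₂)
    (hgap : ∀ e ∈ L, e.1 ≤ t₁ ∨ t₂ < e.1) :
    eval L t₁ = eval L t₂ := by
  unfold eval
  congr 1
  -- The two search predicates agree on every entry of `L`, so the searches find the same entry.
  induction L with
  | nil => rfl
  | cons a l ih =>
    have hiff : a.1 ≤ t₁ ↔ a.1 ≤ t₂ := by
      have := hgap a List.mem_cons_self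
      omega
    have htail := ih hsorted.tail fun e he => hgap e (List.mem_cons_of_mem a he)
    simp only [List.find?_cons, hiff, htail]
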